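/- arXiv:math/0402220 — 3 statements merged into one kernel-verified Lean document; each statement's English description precedes it below -/
import Mathlib

section
/- For any continuous function ψ : (0,∞) → (0,∞) with lim_{ε↓0} ψ(ε) = ∞ there exist constants c_ψ, C_ψ ∈ [0,∞] such that for μ-almost every x ∈ E, liminf_{ε↓0} ℓ_ε(x)/ψ(ε) = c_ψ and limsup_{ε↓0} ℓ_ε(x)/ψ(ε) = C_ψ. (Proposition 3.3) -/
/-!
The limits inferior and superior of `ℓ_ε(x) / ψ(ε)` are constant by a zero-one law for
Cameron–Martin shifts.

For a continuous functional `L` put `h = ∫ L(y) y dμ(y)`; the integral exists by Fernique's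
theorem. Comparing Laplace transforms gives the Cameron–Martin formula: the translate of `μ` by `h`
has density `exp (L - ∫ L² dμ / 2)` with respect to `μ` (`map_add_cmVec`). Two facts follow.

* The density is bounded above and below on the balls `B(x + h, ε)`, `ε ≤ 1`, so
  `ℓ_ε(x + h) - ℓ_ε(x)` stays bounded as `ε ↓ 0` (`exists_abs_rsbf_shift_sub_le`). Since
  `ψ(ε) → ∞`, the limits inferior and superior at `x` and `x + h` agree.
* If a measurable set `A` is invariant under all these shifts, then `∫_A exp L dμ` equals
  `μ(A) ∫ exp L dμ` for every `L`. A finite measure is determined by its Laplace transform on the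
  dual (`measure_ext_of_laplace`), so `μ` restricted to `A` is `μ(A) μ`, and evaluating at `A` gives
  `μ(A) = μ(A)²` (`zero_one_of_shift_invariant`).

Measurability is obtained by taking the limits along rational `ε`. On the support of `μ`, hence
almost everywhere, this does not change them, because `ε ↦ ℓ_ε(x)` is right-continuous there
(`tendsto_rsbf_nhdsGT`, `limsup_eq_limsup_rat`).
-/

open MeasureTheory ProbabilityTheory Filter Metric Topology
open scoped ENNReal

/-- The small ball function `φ(ε) = -log μ(B(0,ε))` of a measure on a normed space. -/
noncomputable def sbf {E : Type*} [NormedAddCommGroup E] [MeasurableSpace E]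
    (μ : Measure E) (ε : ℝ) : ℝ := -Real.log (μ (Metric.closedBall 0 ε)).toReal

/-- The random small ball function `ℓ_ε(x) = -log μ(B(x,ε))`. -/
noncomputable def rsbf {E : Type*} [NormedAddCommGroup E] [MeasurableSpace E]
    (μ : Measure E) (x : E) (ε : ℝ) : ℝ := -Real.log (μ (Metric.closedBall x ε)).toReal

/-- A centered Gaussian measure on a Banach space: every continuous linear functional
has a centered Gaussian distribution. -/
def IsCenteredGaussian {E : Type*} [NormedAddCommGroup E] [NormedSpace ℝ E]
    [MeasurableSpace E] (μ : Measure E) : Prop :=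
  ∀ L : E →L[ℝ] ℝ, ∃ v : NNReal, μ.map L = gaussianReal 0 v


/-! ### Uniqueness of measures with a given Laplace transform -/

section Laplace

variable {E : Type*} [NormedAddCommGroup E] [NormedSpace ℝ E] [CompleteSpace E]
  [SecondCountableTopology E] [MeasurableSpace E] [BorelSpace E]

/-- The everywhere finite Laplace transform on the dual determines a finite measure: in each
direction `L` it extends to an entire function, whose value at `I` is the characteristic
function. -/
lemma measure_ext_of_laplace {μ ν : Measure E} [IsFiniteMeasure μ] [IsFiniteMeasure ν]
    (hint : ∀ L : E →L[ℝ] ℝ, Integrable (fun y => Real.exp (L y)) μ)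
    (h : ∀ L : E →L[ℝ] ℝ, ∫ y, Real.exp (L y) ∂μ = ∫ y, Real.exp (L y) ∂ν) : μ = ν := by
  have h0 : μ = 0 ↔ ν = 0 := by
    have h1 := h 0
    simp only [FunLike.coe_zero, Pi.zero_apply, Real.exp_zero, integral_const, smul_eq_mul,
      mul_one] at h1
    rw [← Measure.measure_univ_eq_zero, ← Measure.measure_univ_eq_zero,
      ← measureReal_eq_zero_iff, h1, measureReal_eq_zero_iff]
  apply Measure.ext_of_charFunDual
  ext L
  have hm : mgf L μ = mgf L ν := by
    ext t
    simpa [mgf] using h (t • L)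
  have hs : integrableExpSet L μ = Set.univ := by
    ext t
    simpa [integrableExpSet] using hint (t • L)
  have := eqOn_complexMGF_of_mgf' hm h0 (x := Complex.I) (by simp [hs])
  simpa [complexMGF, charFunDual_apply, mul_comm] using this

end Laplace

/-! ### Cameron–Martin shifts and the zero-one law -/

section CameronMartin

variable {E : Type*} [NormedAddCommGroup E] [NormedSpace ℝ E] [CompleteSpace E]
  [SecondCountableTopology E] [MeasurableSpace E] [BorelSpace E]

/-- The variance `∫ L² dμ` of the functional `L` under a centered measure `μ`. -/
noncomputable def dualVar (μ : Measure E) (L : E →L[ℝ] ℝ) : ℝ := ∫ y, L y ^ 2 ∂μ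

/-- The Cameron–Martin vector `∫ L(y) y dμ(y)` associated with the functional `L`. -/
noncomputable def cmVec (μ : Measure E) (L : E →L[ℝ] ℝ) : E := ∫ y, L y • y ∂μ

/-- The density `exp (L - ∫ L² dμ / 2)` of the translate of `μ` by `cmVec μ L`. -/
noncomputable def cmDens (μ : Measure E) (L : E →L[ℝ] ℝ) (y : E) : ℝ :=
  Real.exp (L y - dualVar μ L / 2)

omit [CompleteSpace E] [SecondCountableTopology E] in
lemma IsCenteredGaussian.isGaussian {μ : Measure E} (h : IsCenteredGaussian μ) :
    IsGaussian μ :=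
  isGaussian_of_map_eq_gaussianReal fun L => ⟨0, h L⟩

omit [CompleteSpace E] [SecondCountableTopology E] in
lemma IsCenteredGaussian.laplace {μ : Measure E} (h : IsCenteredGaussian μ) (L : E →L[ℝ] ℝ) :
    Integrable (fun y => Real.exp (L y)) μ ∧
      ∫ y, Real.exp (L y) ∂μ = Real.exp (dualVar μ L / 2) := by
  have := h.isGaussian
  obtain ⟨v, hv⟩ := h L
  have hmean : ∫ y, L y ∂μ = 0 := by
    have : ∫ x, x ∂(μ.map L) = ∫ y, L y ∂μ := integral_map (by fun_prop) (by fun_prop)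
    rw [← this, hv, integral_id_gaussianReal]
  have hvar : dualVar μ L = v := by
    have h1 : Var[fun x => x; μ.map L] = Var[L; μ] := variance_map (by fun_prop) (by fun_prop)
    rw [hv, variance_fun_id_gaussianReal] at h1
    rw [h1, variance_of_integral_eq_zero (by fun_prop) hmean]
    rfl
  constructor
  · have := integrable_exp_mul_gaussianReal (μ := 0) (v := v) 1
    rw [← hv] at this
    simpa [Function.comp_def] using this.comp_measurable (f := L) (by fun_prop)
  · have := mgf_gaussianReal hv 1
    simpa [mgf, hvar] using this

omit [CompleteSpace E] [SecondCountableTopology E] [BorelSpace E] in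
lemma cmDens_pos (μ : Measure E) (L : E →L[ℝ] ℝ) (y : E) : 0 < cmDens μ L y := Real.exp_pos _

omit [CompleteSpace E] [SecondCountableTopology E] [BorelSpace E] in
lemma cmDens_eq (μ : Measure E) (L : E →L[ℝ] ℝ) (y : E) :
    cmDens μ L y = Real.exp (L y) * Real.exp (-(dualVar μ L / 2)) := by
  rw [cmDens, ← Real.exp_add, sub_eq_add_neg]

omit [CompleteSpace E] [SecondCountableTopology E] in
lemma IsCenteredGaussian.integrable_cmDens {μ : Measure E} (h : IsCenteredGaussian μ)
    (L : E →L[ℝ] ℝ) : Integrable (cmDens μ L) μ :=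
  ((h.laplace L).1.mul_const (Real.exp (-(dualVar μ L / 2)))).congr
    (ae_of_all _ fun y => (cmDens_eq μ L y).symm)

lemma apply_cmVec {μ : Measure E} [IsGaussian μ] (L M : E →L[ℝ] ℝ) :
    M (cmVec μ L) = ∫ y, L y * M y ∂μ := by
  have hi : Integrable (fun y => L y • y) μ :=
    memLp_one_iff_integrable.1
      ((IsGaussian.memLp_two_id (μ := μ)).smul (IsGaussian.memLp_dual μ L 2 (by simp)))
  rw [cmVec, ← ContinuousLinearMap.integral_comp_comm _ hi]
  simp

omit [CompleteSpace E] [SecondCountableTopology E] in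
lemma dualVar_add {μ : Measure E} [IsGaussian μ] (L M : E →L[ℝ] ℝ) :
    dualVar μ (L + M) = dualVar μ L + dualVar μ M + 2 * ∫ y, L y * M y ∂μ := by
  have hL := IsGaussian.memLp_dual μ L 2 (by simp)
  have hM := IsGaussian.memLp_dual μ M 2 (by simp)
  have hLM : Integrable (fun y => L y * M y) μ := hL.integrable_mul hM
  have e : ∀ y, (L + M) y ^ 2 = (L y ^ 2 + M y ^ 2) + 2 * (L y * M y) := fun y => by
    simp only [FunLike.coe_add, Pi.add_apply]; ring
  simp only [dualVar, e]
  have hs : Integrable (fun y => L y ^ 2 + M y ^ 2) μ := hL.integrable_sq.add hM.integrable_sq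
  rw [integral_add hs (hLM.const_mul 2),
    integral_add hL.integrable_sq hM.integrable_sq, integral_const_mul]

/-- The Cameron–Martin formula for shifts coming from continuous functionals. -/
lemma map_add_cmVec {μ : Measure E} (h : IsCenteredGaussian μ) (L : E →L[ℝ] ℝ) :
    μ.map (fun y => y + cmVec μ L) =
      μ.withDensity (fun y => ENNReal.ofReal (cmDens μ L y)) := by
  have := h.isGaussian
  have hcm : Measurable (cmDens μ L) := by unfold cmDens; fun_prop
  have hci := h.integrable_cmDens L
  have : IsFiniteMeasure (μ.withDensity (fun y => ENNReal.ofReal (cmDens μ L y))) :=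
    isFiniteMeasure_withDensity_ofReal hci.2
  have hsh : Measurable (fun y : E => y + cmVec μ L) := by fun_prop
  apply measure_ext_of_laplace
  · intro M
    rw [integrable_map_measure (by fun_prop) hsh.aemeasurable]
    simpa [Function.comp_def, Real.exp_add] using (h.laplace M).1.mul_const _
  · intro M
    rw [integral_map hsh.aemeasurable (by fun_prop),
      integral_withDensity_eq_integral_toReal_smul (by fun_prop) (by simp)]
    have e1 : ∀ y, Real.exp (M (y + cmVec μ L)) =
        Real.exp (M y) * Real.exp (M (cmVec μ L)) := fun y => by rw [map_add, Real.exp_add]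
    have e2 : ∀ y, (ENNReal.ofReal (cmDens μ L y)).toReal • Real.exp (M y) =
        Real.exp ((L + M) y) * Real.exp (-(dualVar μ L / 2)) := fun y => by
      rw [ENNReal.toReal_ofReal (cmDens_pos μ L y).le, smul_eq_mul, cmDens, ← Real.exp_add,
        ← Real.exp_add]
      congr 1
      simp only [FunLike.coe_add, Pi.add_apply]; ring
    simp only [e1, e2]
    rw [integral_mul_const, integral_mul_const, (h.laplace M).2, (h.laplace (L + M)).2,
      ← Real.exp_add, ← Real.exp_add, dualVar_add, apply_cmVec]
    congr 1; ring

/-- Zero-one law: a measurable set that is invariant under all shifts `cmVec μ L` is trivial.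
By the Cameron–Martin formula, `μ.restrict A` and `μ A • μ` have the same Laplace transform. -/
lemma zero_one_of_shift_invariant {μ : Measure E} (h : IsCenteredGaussian μ) {A : Set E}
    (hA : MeasurableSet A) (hinv : ∀ L x, x + cmVec μ L ∈ A ↔ x ∈ A) : μ A = 0 ∨ μ A = 1 := by
  have := h.isGaussian
  have key : μ.restrict A = μ A • μ := by
    have : IsFiniteMeasure (μ A • μ) := Measure.smul_finite _ (measure_ne_top _ _)
    apply measure_ext_of_laplace
    · exact fun L => (h.laplace L).1.integrableOn
    · intro L
      have h1 : (μ.map (fun y => y + cmVec μ L)) A = μ A := by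
        rw [Measure.map_apply (by fun_prop) hA]
        congr 1
        ext x
        exact hinv L x
      have hci := h.integrable_cmDens L
      rw [map_add_cmVec h, withDensity_apply _ hA,
        ← ofReal_integral_eq_lintegral_ofReal hci.integrableOn
          (ae_of_all _ fun y => (cmDens_pos μ L y).le)] at h1
      have h2 : ∫ y in A, cmDens μ L y ∂μ = (μ A).toReal := by
        rw [← h1, ENNReal.toReal_ofReal (integral_nonneg fun y => (cmDens_pos μ L y).le)]
      simp only [cmDens_eq] at h2
      rw [integral_mul_const, Real.exp_neg, ← div_eq_mul_inv,
        div_eq_iff (Real.exp_pos _).ne'] at h2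
      rw [integral_smul_measure, (h.laplace L).2, h2, smul_eq_mul]
  have h4 := congrArg (fun ν : Measure E => ν A) key
  simp only [Measure.restrict_apply_self, Measure.smul_apply, smul_eq_mul] at h4
  by_cases h0 : μ A = 0
  · exact Or.inl h0
  · right
    exact ((ENNReal.mul_eq_left h0 (measure_ne_top _ _)).1 h4.symm)

/-- A measurable function that is invariant under all shifts `cmVec μ L` is a.e. constant. -/
lemma ae_const_of_shift_invariant {μ : Measure E} (h : IsCenteredGaussian μ) {G : E → EReal}
    (hG : Measurable G) (hinv : ∀ L x, G (x + cmVec μ L) = G x) : ∃ c, ∀ᵐ x ∂μ, G x = c := by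
  have := h.isGaussian
  refine exists_eventuallyEq_const_of_forall_separating MeasurableSet fun U hU => ?_
  rcases zero_one_of_shift_invariant h (hG hU) (fun L x => by simp [hinv]) with h0 | h1
  · right
    exact measure_eq_zero_iff_ae_notMem.1 h0
  · left
    exact mem_ae_iff_prob_eq_one (hG hU) |>.2 h1

end CameronMartin

/-! ### Limits superior and inferior at `0+` along the rationals -/

section RationalLimits

/-- Rationals decreasing to `0`, as a filter on `ℚ`. -/
def ratZeroPlus : Filter ℚ := comap (fun q : ℚ => (q : ℝ)) (𝓝[>] (0 : ℝ))

instance : ratZeroPlus.NeBot := by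
  refine comap_neBot fun t ht => ?_
  obtain ⟨u, hu, hsub⟩ := mem_nhdsGT_iff_exists_Ioo_subset.1 ht
  obtain ⟨q, hq1, hq2⟩ := exists_rat_btwn (Set.mem_Ioi.1 hu)
  exact ⟨q, hsub ⟨hq1, hq2⟩⟩

lemma tendsto_ratCast_zeroPlus :
    Tendsto (fun q : ℚ => (q : ℝ)) ratZeroPlus (𝓝[>] (0 : ℝ)) := tendsto_comap

/-- For a function that is right-continuous on `(0, ∞)`, the limit superior at `0+` may be
computed along the rationals, since an upper bound at the rationals passes to right limits. -/
lemma limsup_eq_limsup_rat {α : Type*} [CompleteLinearOrder α] [TopologicalSpace α]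
    [OrderTopology α] {f : ℝ → α} (hf : ∀ ε > 0, Tendsto f (𝓝[>] ε) (𝓝 (f ε))) :
    limsup f (𝓝[>] 0) = limsup (fun q : ℚ => f q) ratZeroPlus := by
  apply le_antisymm
  · refine sInf_le_sInf fun a ha => ?_
    simp only [Set.mem_ofPred_eq, eventually_map, ratZeroPlus, eventually_comap] at ha ⊢
    obtain ⟨u, hu, hsub⟩ := mem_nhdsGT_iff_exists_Ioo_subset.1 ha
    filter_upwards [Ioo_mem_nhdsGT (Set.mem_Ioi.1 hu)] with ε hε
    by_contra hlt
    rw [not_le] at hlt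
    have hev := (hf ε hε.1).eventually (lt_mem_nhds hlt)
    obtain ⟨w, hw, hwsub⟩ := mem_nhdsGT_iff_exists_Ioo_subset.1 hev
    obtain ⟨q, hq1, hq2⟩ := exists_rat_btwn (lt_min (Set.mem_Ioi.1 hw) hε.2)
    have h1 : f q ≤ a :=
      hsub (show (q : ℝ) ∈ Set.Ioo 0 u from
        ⟨hε.1.trans hq1, hq2.trans_le (min_le_right _ _)⟩) q rfl
    have h2 : a < f q := hwsub ⟨hq1, hq2.trans_le (min_le_left _ _)⟩
    exact absurd h1 (not_le.2 h2)
  · exact limsup_le_limsup_of_le tendsto_ratCast_zeroPlus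

lemma liminf_eq_liminf_rat {α : Type*} [CompleteLinearOrder α] [TopologicalSpace α]
    [OrderTopology α] {f : ℝ → α} (hf : ∀ ε > 0, Tendsto f (𝓝[>] ε) (𝓝 (f ε))) :
    liminf f (𝓝[>] 0) = liminf (fun q : ℚ => f q) ratZeroPlus :=
  limsup_eq_limsup_rat (α := αᵒᵈ) hf

lemma measurable_limsup_rat {Ω : Type*} [MeasurableSpace Ω] {f : ℚ → Ω → EReal}
    (hf : ∀ q, Measurable (f q)) :
    Measurable (fun x => limsup (fun q => f q x) ratZeroPlus) ∧
      Measurable (fun x => liminf (fun q => f q x) ratZeroPlus) := by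
  have : ratZeroPlus.IsCountablyGenerated := by unfold ratZeroPlus; infer_instance
  obtain ⟨s, hs⟩ := ratZeroPlus.exists_antitone_basis
  have hb : ratZeroPlus.HasCountableBasis (fun _ : ℕ => True) s :=
    ⟨hs.toHasBasis, Set.to_countable _⟩
  exact ⟨Measurable.limsup' hf hb fun _ => Set.to_countable _,
    Measurable.liminf' hf hb fun _ => Set.to_countable _⟩

lemma limsup_coe_le_of_tendsto_sub {ι : Type*} {l : Filter ι} [l.NeBot] {u v : ι → ℝ}
    (h : Tendsto (fun i => u i - v i) l (𝓝 0)) :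
    limsup (fun i => (u i : EReal)) l ≤ limsup (fun i => (v i : EReal)) l ∧
      liminf (fun i => (v i : EReal)) l ≤ liminf (fun i => (u i : EReal)) l := by
  have h' : Tendsto (fun i => ((u i - v i : ℝ) : EReal)) l (𝓝 ((0 : ℝ) : EReal)) :=
    (continuous_coe_real_ereal.tendsto 0).comp h
  have hsum : (fun i => (u i : EReal)) =
      (fun i => ((u i - v i : ℝ) : EReal)) + fun i => (v i : EReal) := by
    ext i
    simp only [Pi.add_apply, ← EReal.coe_add, sub_add_cancel]
  constructor
  · rw [hsum]
    refine (EReal.limsup_add_le ?_ ?_).trans ?_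
    · left; rw [h'.limsup_eq]; simp
    · left; rw [h'.limsup_eq]; simp
    · rw [h'.limsup_eq]; simp
  · rw [hsum]
    refine le_trans ?_ EReal.le_liminf_add
    rw [h'.liminf_eq]; simp

lemma limsup_liminf_coe_eq_of_tendsto_sub {ι : Type*} {l : Filter ι} [l.NeBot] {u v : ι → ℝ}
    (h : Tendsto (fun i => u i - v i) l (𝓝 0)) :
    limsup (fun i => (u i : EReal)) l = limsup (fun i => (v i : EReal)) l ∧
      liminf (fun i => (u i : EReal)) l = liminf (fun i => (v i : EReal)) l := by
  have h1 := limsup_coe_le_of_tendsto_sub h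
  have h2 := limsup_coe_le_of_tendsto_sub (u := v) (v := u) (l := l) (by simpa using h.neg)
  exact ⟨le_antisymm h1.1 h2.1, le_antisymm h2.2 h1.2⟩

end RationalLimits

/-! ### Regularity of the random small ball function -/

section SmallBall

variable {E : Type*} [NormedAddCommGroup E] [NormedSpace ℝ E] [CompleteSpace E]
  [SecondCountableTopology E] [MeasurableSpace E] [BorelSpace E]

omit [NormedSpace ℝ E] [CompleteSpace E] in
lemma measurable_rsbf (μ : Measure E) [IsProbabilityMeasure μ] (ε : ℝ) :
    Measurable fun x => rsbf μ x ε := by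
  have hs : MeasurableSet {p : E × E | dist p.2 p.1 ≤ ε} :=
    (isClosed_le (by fun_prop) continuous_const).measurableSet
  have h : Measurable fun x : E => μ (Metric.closedBall x ε) := measurable_measure_prodMk_left hs
  exact (Real.measurable_log.comp h.ennreal_toReal).neg

omit [NormedSpace ℝ E] [CompleteSpace E] [SecondCountableTopology E] [BorelSpace E] in
lemma rsbf_nonneg (μ : Measure E) [IsProbabilityMeasure μ] (x : E) (ε : ℝ) :
    0 ≤ rsbf μ x ε :=
  neg_nonneg.2 (Real.log_nonpos measureReal_nonneg measureReal_le_one)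

omit [NormedSpace ℝ E] [CompleteSpace E] [SecondCountableTopology E] in
/-- At points of the support, where no ball is null, `ε ↦ ℓ_ε(x)` is right-continuous, because
a closed ball is the intersection of the larger concentric ones. -/
lemma tendsto_rsbf_nhdsGT {μ : Measure E} [IsProbabilityMeasure μ] {x : E}
    (hx : x ∈ μ.support) {ε : ℝ} (hε : 0 < ε) :
    Tendsto (rsbf μ x) (𝓝[>] ε) (𝓝 (rsbf μ x ε)) := by
  have hinter : ⋂ r > ε, Metric.closedBall x r = Metric.closedBall x ε := by
    ext y
    simp only [Set.mem_iInter, Metric.mem_closedBall]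
    exact ⟨fun h => le_of_forall_gt_imp_ge_of_dense h, fun h r hr => h.trans (le_of_lt hr)⟩
  have h1 : Tendsto (μ ∘ fun r => Metric.closedBall x r) (𝓝[>] ε)
      (𝓝 (μ (⋂ r > ε, Metric.closedBall x r))) :=
    tendsto_measure_biInter_gt (fun r _ => measurableSet_closedBall.nullMeasurableSet)
      (fun i j _ hij => Metric.closedBall_subset_closedBall hij)
      ⟨ε + 1, by simp, measure_ne_top _ _⟩
  rw [hinter] at h1
  have hpos : 0 < μ (Metric.closedBall x ε) :=
    (Measure.mem_support_iff_forall x).1 hx _ (Metric.closedBall_mem_nhds x hε)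
  have h2 := (ENNReal.tendsto_toReal (measure_ne_top μ _)).comp h1
  exact ((Real.continuousAt_log (ENNReal.toReal_pos hpos.ne' (measure_ne_top _ _)).ne').tendsto.comp
    h2).neg

/-- A Cameron–Martin shift `cmVec μ L` changes `ℓ_ε` by a bounded amount, because its density is
bounded above and below on bounded sets. This includes the points where balls are null. -/
lemma exists_abs_rsbf_shift_sub_le {μ : Measure E} (h : IsCenteredGaussian μ) (L : E →L[ℝ] ℝ)
    (x : E) : ∃ K : ℝ, ∀ ε ≤ 1, |rsbf μ (x + cmVec μ L) ε - rsbf μ x ε| ≤ K := by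
  have := h.isGaussian
  set z := x + cmVec μ L with hz
  set m := L z - dualVar μ L / 2 with hm
  refine ⟨|m| + ‖L‖, fun ε hε => ?_⟩
  set B := Metric.closedBall z ε
  have hB : MeasurableSet B := measurableSet_closedBall
  have hint : (μ (Metric.closedBall x ε)).toReal = ∫ y in B, cmDens μ L y ∂μ := by
    have h1 : μ.map (fun y => y + cmVec μ L) B = μ (Metric.closedBall x ε) := by
      rw [Measure.map_apply (by fun_prop) hB]
      congr 1
      ext y
      simp [B, hz]
    rw [← h1, map_add_cmVec h, withDensity_apply _ hB,
      ← ofReal_integral_eq_lintegral_ofReal (h.integrable_cmDens L).integrableOn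
        (ae_of_all _ fun y => (cmDens_pos μ L y).le),
      ENNReal.toReal_ofReal (integral_nonneg fun y => (cmDens_pos μ L y).le)]
  have hosc : ∀ y ∈ B, |L y - L z| ≤ ‖L‖ := fun y hy => by
    rw [← map_sub, ← Real.norm_eq_abs]
    refine (L.le_opNorm _).trans (mul_le_of_le_one_right (norm_nonneg _) ?_)
    rw [← dist_eq_norm]
    exact (Metric.mem_closedBall.1 hy).trans hε
  have hup : (μ (Metric.closedBall x ε)).toReal ≤
      Real.exp (|m| + ‖L‖) * (μ B).toReal := by
    rw [hint]
    have := setIntegral_mono_on (h.integrable_cmDens L).integrableOn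
      (integrable_const (Real.exp (|m| + ‖L‖))).integrableOn hB (fun y hy => by
        rw [cmDens]
        refine Real.exp_le_exp.2 ?_
        linarith [(abs_le.1 (hosc y hy)).2, le_abs_self m])
    simpa [Measure.real, mul_comm] using this
  have hlow : Real.exp (-(|m| + ‖L‖)) * (μ B).toReal ≤
      (μ (Metric.closedBall x ε)).toReal := by
    rw [hint]
    have := setIntegral_mono_on
      (integrable_const (Real.exp (-(|m| + ‖L‖)))).integrableOn
      (h.integrable_cmDens L).integrableOn hB (fun y hy => by
        rw [cmDens]
        refine Real.exp_le_exp.2 ?_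
        linarith [(abs_le.1 (hosc y hy)).1, neg_abs_le m])
    simpa [Measure.real, mul_comm] using this
  change |(-Real.log (μ B).toReal) - (-Real.log (μ (Metric.closedBall x ε)).toReal)| ≤ _
  rcases (ENNReal.toReal_nonneg (a := μ B)).eq_or_lt with h0 | hpos
  · have h0' : (μ (Metric.closedBall x ε)).toReal = 0 := by
      rw [← h0, mul_zero] at hup
      exact le_antisymm hup ENNReal.toReal_nonneg
    rw [← h0, h0']
    simp
    positivity
  · have hpos' := (mul_pos (Real.exp_pos _) hpos).trans_le hlow
    have l1 := Real.log_le_log hpos' hup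
    have l2 := Real.log_le_log (mul_pos (Real.exp_pos _) hpos) hlow
    rw [Real.log_mul (Real.exp_pos _).ne' hpos.ne', Real.log_exp] at l1 l2
    rw [abs_le]
    constructor <;> linarith

end SmallBall

theorem statement2 {E : Type*} [NormedAddCommGroup E] [NormedSpace ℝ E]
    [CompleteSpace E] [SecondCountableTopology E] [MeasurableSpace E] [BorelSpace E]
    (μ : Measure E) [IsProbabilityMeasure μ]
    (hGauss : IsCenteredGaussian μ) (hND : μ ≠ Measure.dirac 0)
    (ψ : ℝ → ℝ) (hψc : ContinuousOn ψ (Set.Ioi 0)) (hψpos : ∀ ε > 0, 0 < ψ ε)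
    (hψtop : Tendsto ψ (𝓝[>] 0) atTop) :
    ∃ c C : EReal, c ∈ Set.Icc (0:EReal) ⊤ ∧ C ∈ Set.Icc (0:EReal) ⊤ ∧
      ∀ᵐ x ∂μ,
        Filter.liminf (fun ε : ℝ => ((rsbf μ x ε / ψ ε : ℝ) : EReal)) (𝓝[>] 0) = c ∧
        Filter.limsup (fun ε : ℝ => ((rsbf μ x ε / ψ ε : ℝ) : EReal)) (𝓝[>] 0) = C := by
  have hmeas := measurable_limsup_rat (Ω := E)
    (f := fun q x => ((rsbf μ x q / ψ q : ℝ) : EReal))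
    (fun q => ((measurable_rsbf μ q).div_const _).coe_real_ereal)
  -- The quotients at `x + cmVec μ L` and `x` differ by `O(1) / ψ`, which tends to `0`.
  have hdiff : ∀ (L : E →L[ℝ] ℝ) (x : E), Tendsto
      (fun q : ℚ => rsbf μ (x + cmVec μ L) q / ψ q - rsbf μ x q / ψ q) ratZeroPlus (𝓝 0) := by
    intro L x
    obtain ⟨K, hK⟩ := exists_abs_rsbf_shift_sub_le hGauss L x
    refine Tendsto.comp (g := fun ε : ℝ => rsbf μ (x + cmVec μ L) ε / ψ ε - rsbf μ x ε / ψ ε)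
      ?_ tendsto_ratCast_zeroPlus
    refine squeeze_zero_norm' ?_ (hψtop.const_div_atTop K)
    filter_upwards [Ioo_mem_nhdsGT (zero_lt_one' ℝ)] with ε hε
    rw [← sub_div, norm_div, Real.norm_eq_abs, Real.norm_of_nonneg (hψpos ε hε.1).le]
    exact div_le_div_of_nonneg_right (hK ε hε.2.le) (hψpos ε hε.1).le
  obtain ⟨c, hc⟩ := ae_const_of_shift_invariant hGauss hmeas.2
    fun L x => (limsup_liminf_coe_eq_of_tendsto_sub (hdiff L x)).2
  obtain ⟨C, hC⟩ := ae_const_of_shift_invariant hGauss hmeas.1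
    fun L x => (limsup_liminf_coe_eq_of_tendsto_sub (hdiff L x)).1
  have hall : ∀ᵐ x ∂μ,
      liminf (fun ε : ℝ => ((rsbf μ x ε / ψ ε : ℝ) : EReal)) (𝓝[>] 0) = c ∧
      limsup (fun ε : ℝ => ((rsbf μ x ε / ψ ε : ℝ) : EReal)) (𝓝[>] 0) = C := by
    filter_upwards [hc, hC, Measure.support_mem_ae (μ := μ)] with x hcx hCx hx
    have hrc : ∀ ε > 0, Tendsto (fun ε : ℝ => ((rsbf μ x ε / ψ ε : ℝ) : EReal)) (𝓝[>] ε)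
        (𝓝 ((rsbf μ x ε / ψ ε : ℝ) : EReal)) := fun ε hε =>
      (continuous_coe_real_ereal.tendsto _).comp ((tendsto_rsbf_nhdsGT hx hε).div
        ((hψc.continuousAt (Ioi_mem_nhds hε)).tendsto.mono_left nhdsWithin_le_nhds)
        (hψpos ε hε).ne')
    exact ⟨(liminf_eq_liminf_rat hrc).trans hcx, (limsup_eq_limsup_rat hrc).trans hCx⟩
  obtain ⟨x, hx⟩ := hall.exists
  have hlow : 0 ≤ liminf (fun ε : ℝ => ((rsbf μ x ε / ψ ε : ℝ) : EReal)) (𝓝[>] 0) := by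
    refine le_liminf_of_le (by isBoundedDefault) ?_
    filter_upwards [self_mem_nhdsWithin] with ε hε
    exact EReal.coe_nonneg.2 (div_nonneg (rsbf_nonneg μ x ε) (hψpos ε hε).le)
  refine ⟨c, C, ⟨hx.1 ▸ hlow, le_top⟩, ⟨?_, le_top⟩, hall⟩
  rw [← hx.2]
  exact hlow.trans (liminf_le_limsup)
end

section
/- Let f : (0,∞) → (0,∞) be a decreasing convex function and ν > 0 a constant such that f(2r) ≥ ν f(r) for all sufficiently large r. Then for every function Δ : (0,∞) → ℝ with Δ(r) = o(r) as r → ∞ (and r + Δ(r) > 0 for large r), one has lim_{r→∞} f(r + Δ(r))/f(r) = 1. (Lemma 5.2) -/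
/-!
Put `ε = |Δ r| / r`, so that `r + Δ r` lies in `[r - ε r, r + ε r]`. Growth at `r / 2` gives
`f (r / 2) ≤ f r / ν`. Writing `r - ε r` as a convex combination of `r / 2` and `r`, and `r` as one
of `r / 2` and `r + ε r`, convexity bounds `f (r - ε r)` above and `f (r + ε r)` below by
`(1 ± 2 ε / ν) f r`; monotonicity and squeezing then finish.
-/

open Filter Topology

/-- Convexity between `r / 2` and `r`: an upper bound just to the left of `r`. -/
lemma convex_left_bound {f : ℝ → ℝ} (hconv : ConvexOn ℝ (Set.Ioi 0) f) {r ε : ℝ}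
    (hr : 0 < r) (hε : 0 ≤ ε) (hε' : ε ≤ 1 / 4) :
    f (r - ε * r) ≤ (1 - 2 * ε) * f r + 2 * ε * f (r / 2) := by
  have h := hconv.2 (Set.mem_Ioi.2 hr) (Set.mem_Ioi.2 (half_pos hr))
    (show 0 ≤ 1 - 2 * ε by linarith) (show 0 ≤ 2 * ε by linarith) (by ring)
  simp only [smul_eq_mul] at h
  rwa [show (1 - 2 * ε) * r + 2 * ε * (r / 2) = r - ε * r by ring] at h

/-- Convexity between `r / 2` and `r + ε r`: a lower bound just to the right of `r`. -/
lemma convex_right_bound {f : ℝ → ℝ} (hconv : ConvexOn ℝ (Set.Ioi 0) f) {r ε : ℝ}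
    (hr : 0 < r) (hε : 0 ≤ ε) :
    (1 + 2 * ε) * f r ≤ 2 * ε * f (r / 2) + f (r + ε * r) := by
  have hd : 0 < 1 + 2 * ε := by linarith
  have h := hconv.2 (Set.mem_Ioi.2 (half_pos hr))
    (Set.mem_Ioi.2 (show 0 < r + ε * r by positivity))
    (show 0 ≤ 2 * ε / (1 + 2 * ε) by positivity) (show 0 ≤ 1 / (1 + 2 * ε) by positivity)
    (by field_simp; ring)
  simp only [smul_eq_mul] at h
  rw [show 2 * ε / (1 + 2 * ε) * (r / 2) + 1 / (1 + 2 * ε) * (r + ε * r) = r by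
    field_simp; ring] at h
  calc (1 + 2 * ε) * f r
      ≤ (1 + 2 * ε) * (2 * ε / (1 + 2 * ε) * f (r / 2) + 1 / (1 + 2 * ε) * f (r + ε * r)) :=
        mul_le_mul_of_nonneg_left h hd.le
    _ = 2 * ε * f (r / 2) + f (r + ε * r) := by field_simp

theorem statement9 (f : ℝ → ℝ) (hpos : ∀ r > (0:ℝ), 0 < f r)
    (hdec : AntitoneOn f (Set.Ioi 0)) (hconv : ConvexOn ℝ (Set.Ioi 0) f)
    (ν : ℝ) (hν : 0 < ν) (hgrow : ∀ᶠ r in atTop, ν * f r ≤ f (2 * r))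
    (Δ : ℝ → ℝ) (hΔ : Tendsto (fun r => Δ r / r) atTop (𝓝 0))
    (hpos' : ∀ᶠ r in atTop, 0 < r + Δ r) :
    Tendsto (fun r => f (r + Δ r) / f r) atTop (𝓝 1) := by
  have habs : Tendsto (fun r => |Δ r / r|) atTop (𝓝 0) := by simpa using hΔ.abs
  have hhalf : ∀ᶠ r in atTop, ν * f (r / 2) ≤ f (2 * (r / 2)) :=
    (tendsto_id.atTop_div_const (by norm_num : (0:ℝ) < 2)).eventually hgrow
  have hsmall : ∀ᶠ r in atTop, |Δ r / r| ≤ 1 / 4 :=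
    habs.eventually_le_const (by norm_num)
  have key : ∀ᶠ r in atTop, 1 - 2 / ν * |Δ r / r| ≤ f (r + Δ r) / f r ∧
      f (r + Δ r) / f r ≤ 1 + 2 / ν * |Δ r / r| := by
    filter_upwards [hhalf, hsmall, hpos', eventually_gt_atTop 0] with r hg hs hp hr
    have hfr := hpos r hr
    have hΔr : |Δ r| = |Δ r / r| * r := by
      rw [abs_div, abs_of_pos hr]; field_simp
    have hε0 : 0 ≤ |Δ r / r| := abs_nonneg _
    set ε := |Δ r / r|
    obtain ⟨hlo, hhi⟩ := abs_le.1 hΔr.le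
    rw [mul_div_cancel₀ r (two_ne_zero)] at hg
    have hg' : 2 * ε * f (r / 2) ≤ 2 / ν * ε * f r := by
      calc 2 * ε * f (r / 2) = 2 / ν * ε * (ν * f (r / 2)) := by field_simp
        _ ≤ _ := by gcongr
    have hl := convex_left_bound hconv hr hε0 hs
    have hrt := convex_right_bound hconv hr hε0
    have h1 : f (r + Δ r) ≤ f (r - ε * r) :=
      hdec (Set.mem_Ioi.2 (by nlinarith)) (Set.mem_Ioi.2 hp) (by linarith)
    have h2 : f (r + ε * r) ≤ f (r + Δ r) :=
      hdec (Set.mem_Ioi.2 hp) (Set.mem_Ioi.2 (by positivity)) (by linarith)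
    have h3 : 0 ≤ ε * f r := by positivity
    constructor
    · rw [le_div_iff₀ hfr]; nlinarith
    · rw [div_le_iff₀ hfr]; nlinarith
  refine tendsto_of_tendsto_of_tendsto_of_le_of_le' (g := fun r => 1 - 2 / ν * |Δ r / r|)
    (h := fun r => 1 + 2 / ν * |Δ r / r|) ?_ ?_ (key.mono fun _ h => h.1) (key.mono fun _ h => h.2)
  · simpa using (habs.const_mul (2 / ν)).const_sub 1
  · simpa using (habs.const_mul (2 / ν)).const_add 1
end

section
/- Suppose φ_* : (0,∞) → (0,∞) is a convex bijection with ℓ_ε(x)/φ_*(ε) → 1 in μ-probability as ε ↓ 0, and let ν₁ > 0 be such that φ_*^{-1}(2r) ≥ ν₁ φ_*^{-1}(r) for all sufficiently large r. Fix κ ∈ (0,1) and set δ := (1/4)·min{1, ν₁ κ}, and for r ≥ 0 define X₁(r) := {x ∈ E : ℓ_{(1+κ)φ_*^{-1}(r)}(x) ≤ (1−δ)r} and X₂(r) := {x ∈ E : ℓ_{(1−κ)φ_*^{-1}(r)}(x) ≥ (1+δ)r}. Then lim_{r→∞} μ(X₁(r)) = lim_{r→∞} μ(X₂(r)) = 1.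 (Proposition 5.4) -/
/-!
The function `φs` is convex and injective, hence continuous and strictly monotone on `(0, ∞)`.

It cannot be increasing (`not_strictMonoOn`). Otherwise `φs ε → 0` as `ε ↓ 0`, so for all small `ε`
some ball of radius `ε` has mass at least `1/2`. The same then holds for intervals of length
`O(ε)` under the law of any functional `L`, which is impossible for a nondegenerate Gaussian law as
its density is bounded. So every functional is almost surely `0` and `μ` is the Dirac mass at `0`
(`eq_dirac_of_ball_mass`).

Hence `φs` is decreasing and `ε = φinv r ↓ 0` as `r → ∞`. With `ε' = φinv (r / 2)`, the chord of
`φs` over `[ε, ε']` has slope `-(r / 2) / (ε' - ε)`, and `ε ≥ ν₁ ε'`. Convexity propagates this slope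
to the points `(1 ± κ) ε` (`phi_gap`), giving with `δ = min 1 (ν₁ κ) / 4` the bounds
`φs ((1 + κ) ε) ≤ (1 - 2 δ) r` and `φs ((1 - κ) ε) ≥ (1 + 2 δ) r`. Since the ratio of the random
small ball function to `φs` is within `δ / 2` of `1` off an event of vanishing probability, half of
the gap `2 δ` remains for the random small ball function.
-/

open MeasureTheory ProbabilityTheory Filter Metric Topology
open scoped ENNReal

lemma gaussianReal_closedBall_le {v : NNReal} (hv : v ≠ 0) (a s : ℝ) :
    gaussianReal 0 v (closedBall a s) ≤
      ENNReal.ofReal ((√(2 * Real.pi * v))⁻¹) * ENNReal.ofReal (2 * s) := by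
  rw [gaussianReal_apply _ hv, ← Real.volume_closedBall a s, ← setLIntegral_const]
  refine lintegral_mono fun x => ?_
  refine ENNReal.ofReal_le_ofReal ?_
  rw [gaussianPDFReal]
  refine mul_le_of_le_one_right (by positivity) ?_
  rw [Real.exp_le_one_iff, neg_div, neg_nonpos]
  positivity

/-- A centered Gaussian measure with arbitrarily small balls of mass at least `1/2` is degenerate:
otherwise some functional has a Gaussian law with bounded density, and this law would give mass at
least `1/2` to arbitrarily short intervals. -/
lemma eq_dirac_of_ball_mass {E : Type*} [NormedAddCommGroup E] [NormedSpace ℝ E]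
    [CompleteSpace E] [SecondCountableTopology E] [MeasurableSpace E] [BorelSpace E]
    (μ : Measure E) [IsProbabilityMeasure μ] (hGauss : IsCenteredGaussian μ)
    (h : ∀ᶠ ε in 𝓝[>] (0 : ℝ), ∃ x, (2⁻¹ : ℝ≥0∞) ≤ μ (closedBall x ε)) :
    μ = Measure.dirac 0 := by
  have key : ∀ L : E →L[ℝ] ℝ, μ.map L = Measure.dirac 0 := by
    intro L
    obtain ⟨v, hv⟩ := hGauss L
    by_cases hv0 : v = 0
    · rw [hv, hv0, gaussianReal_zero_var]
    exfalso
    set C := ENNReal.ofReal ((√(2 * Real.pi * v))⁻¹) with hC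
    have hlim : Tendsto (fun ε : ℝ => C * ENNReal.ofReal (2 * (‖L‖ * ε))) (𝓝[>] 0) (𝓝 0) := by
      have h1 : Tendsto (fun ε : ℝ => 2 * (‖L‖ * ε)) (𝓝[>] 0) (𝓝 0) := by
        have : Tendsto (fun ε : ℝ => 2 * (‖L‖ * ε)) (𝓝 0) (𝓝 (2 * (‖L‖ * 0))) :=
          Continuous.tendsto (by fun_prop) 0
        simpa using this.mono_left nhdsWithin_le_nhds
      simpa using ENNReal.Tendsto.const_mul (ENNReal.tendsto_ofReal h1)
        (Or.inr ENNReal.ofReal_ne_top)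
    have hsmall := hlim.eventually_lt_const (show (0 : ℝ≥0∞) < 2⁻¹ by simp)
    obtain ⟨ε, hε, x, hx⟩ := (hsmall.and h).exists
    have hsub : closedBall x ε ⊆ L ⁻¹' closedBall (L x) (‖L‖ * ε) := by
      intro y hy
      rw [Set.mem_preimage, mem_closedBall, dist_eq_norm, ← map_sub]
      rw [mem_closedBall, dist_eq_norm] at hy
      exact (L.le_opNorm _).trans (by gcongr)
    have h2 : (2⁻¹ : ℝ≥0∞) ≤ C * ENNReal.ofReal (2 * (‖L‖ * ε)) := by
      calc (2⁻¹ : ℝ≥0∞) ≤ μ (closedBall x ε) := hx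
        _ ≤ μ (L ⁻¹' closedBall (L x) (‖L‖ * ε)) := measure_mono hsub
        _ = gaussianReal 0 v (closedBall (L x) (‖L‖ * ε)) := by
          rw [← hv, Measure.map_apply L.continuous.measurable measurableSet_closedBall]
        _ ≤ _ := gaussianReal_closedBall_le hv0 _ _
    exact absurd hε (not_lt.mpr h2)
  refine Measure.ext_of_charFunDual ?_
  ext L
  have hdirac : (Measure.dirac (0 : E)).map L = Measure.dirac 0 := by
    rw [Measure.map_dirac' L.continuous.measurable, map_zero]
  rw [charFunDual_eq_charFun_map_one, charFunDual_eq_charFun_map_one, key L, hdirac]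

lemma not_strictMonoOn {E : Type*} [NormedAddCommGroup E] [NormedSpace ℝ E]
    [CompleteSpace E] [SecondCountableTopology E] [MeasurableSpace E] [BorelSpace E]
    (μ : Measure E) [IsProbabilityMeasure μ]
    (hGauss : IsCenteredGaussian μ) (hND : μ ≠ Measure.dirac 0) (φs : ℝ → ℝ)
    (hbij : Set.BijOn φs (Set.Ioi 0) (Set.Ioi 0))
    (hprob : ∀ δ > (0:ℝ),
      Tendsto (fun ε : ℝ => μ {x | δ < |rsbf μ x ε / φs ε - 1|}) (𝓝[>] 0) (𝓝 0)) :
    ¬ StrictMonoOn φs (Set.Ioi 0) := by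
  intro hmono
  refine hND (eq_dirac_of_ball_mass μ hGauss ?_)
  have hlog : 0 < Real.log 2 := Real.log_pos (by norm_num)
  obtain ⟨e, he, hφe⟩ := hbij.surjOn (show Real.log 2 / 2 ∈ Set.Ioi (0 : ℝ) from half_pos hlog)
  have hprob1 := (hprob 1 one_pos).eventually_lt_const (zero_lt_one' ℝ≥0∞)
  filter_upwards [hprob1, Ioo_mem_nhdsGT he] with ε hε1 hεe
  by_contra! hcon
  -- At a point of the support the ball has positive mass, so the logarithm is not a junk value.
  have hae : ∀ᵐ x ∂μ, 1 < |rsbf μ x ε / φs ε - 1| := by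
    filter_upwards [Measure.support_mem_ae (μ := μ)] with x hx
    by_contra! hle
    have hφpos : 0 < φs ε := hbij.mapsTo hεe.1
    have hφlt : φs ε < Real.log 2 / 2 := hφe ▸ hmono hεe.1 he hεe.2
    have hb : rsbf μ x ε ≤ Real.log 2 := by
      have h1 : rsbf μ x ε / φs ε ≤ 2 := by linarith [(abs_le.mp hle).2]
      rw [div_le_iff₀ hφpos] at h1
      linarith
    have hpos : 0 < (μ (closedBall x ε)).toReal :=
      ENNReal.toReal_pos ((Measure.mem_support_iff_forall x).mp hx _
        (closedBall_mem_nhds x hεe.1)).ne' (measure_ne_top _ _)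
    have hlt : (μ (closedBall x ε)).toReal < 2⁻¹ := by
      have := (ENNReal.toReal_lt_toReal (measure_ne_top μ _) (by simp)).mpr (hcon x)
      simpa using this
    have := Real.log_lt_log hpos hlt
    rw [Real.log_inv] at this
    unfold rsbf at hb
    linarith
  have h1 : μ {x | 1 < |rsbf μ x ε / φs ε - 1|} = 1 := by
    rw [measure_eq_measure_of_null_sdiff (Set.subset_univ _) ?_, measure_univ]
    rw [← Set.compl_eq_univ_sdiff]
    exact hae
  exact absurd hε1 (by simp [h1])

lemma strictMonoOn_or_strictAntiOn {φs : ℝ → ℝ} (hconv : ConvexOn ℝ (Set.Ioi 0) φs)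
    (hinj : Set.InjOn φs (Set.Ioi 0)) :
    StrictMonoOn φs (Set.Ioi 0) ∨ StrictAntiOn φs (Set.Ioi 0) := by
  have hc : ContinuousOn φs (Set.Ioi 0) := hconv.continuousOn isOpen_Ioi
  have : Inhabited (Set.Ioi (0 : ℝ)) := ⟨⟨1, Set.mem_Ioi.mpr one_pos⟩⟩
  rcases Continuous.strictMono_of_inj hc.domRestrict hinj.injective with h | h
  · exact Or.inl (StrictMono.of_domRestrict h)
  · exact Or.inr fun _ hx _ hy hxy => h (show (⟨_, hx⟩ : Set.Ioi (0 : ℝ)) < ⟨_, hy⟩ from hxy)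

/-- If `φs` halves between `e` and `e'`, where `ν e' ≤ e`, convexity forces it to change by a fixed
proportion between `e` and `(1 ± κ) e`. -/
lemma phi_gap {φs : ℝ → ℝ} (hconv : ConvexOn ℝ (Set.Ioi 0) φs)
    (hanti : StrictAntiOn φs (Set.Ioi 0)) {e e' r ν κ d : ℝ} (he : 0 < e) (hee' : e < e')
    (hr : 0 < r) (hφe : φs e = r) (hφe' : φs e' = r / 2) (hν : ν * e' ≤ e)
    (hκ : κ ∈ Set.Ioo (0 : ℝ) 1) (hd : 4 * d ≤ 1) (hd' : 4 * d ≤ ν * κ) (hd0 : 0 < d) :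
    φs ((1 + κ) * e) ≤ (1 - 2 * d) * r ∧ (1 + 2 * d) * r ≤ φs ((1 - κ) * e) := by
  obtain ⟨hκ0, hκ1⟩ := hκ
  have he' : 0 < e' := he.trans hee'
  have hκe : 0 < κ * e := mul_pos hκ0 he
  have hgap : 4 * d * r * (e' - e) ≤ r * (κ * e) := by
    have h1 : 4 * d * e' ≤ κ * e := by nlinarith
    have h2 : 4 * d * (e' - e) ≤ κ * e := by nlinarith
    nlinarith
  constructor
  · rcases lt_or_ge ((1 + κ) * e) e' with hlt | hge
    · have hs := hconv.slope_mono_adjacent (x := e) (y := (1 + κ) * e) (z := e') he he'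
        (by linarith) hlt
      rw [div_le_div_iff₀ (by linarith) (by linarith), hφe, hφe'] at hs
      have : φs ((1 + κ) * e) * (e' - e) ≤ (1 - 2 * d) * r * (e' - e) := by linarith
      exact le_of_mul_le_mul_right this (by linarith)
    · have h1 : φs ((1 + κ) * e) ≤ φs e' :=
        hanti.antitoneOn he' (show 0 < (1 + κ) * e by linarith) hge
      nlinarith
  · have hx : 0 < (1 - κ) * e := mul_pos (by linarith) he
    have hs := hconv.slope_mono_adjacent (x := (1 - κ) * e) (y := e) (z := e') hx he'
      (by linarith) hee'
    rw [div_le_div_iff₀ (by linarith) (by linarith), hφe, hφe'] at hs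
    have : (1 + 2 * d) * r * (e' - e) ≤ φs ((1 - κ) * e) * (e' - e) := by linarith
    exact le_of_mul_le_mul_right this (by linarith)

lemma tendsto_measure_one {E : Type*} [MeasurableSpace E] (μ : Measure E) [IsProbabilityMeasure μ]
    {A X : ℝ → Set E} (hA : Tendsto (fun r => μ (A r)) atTop (𝓝 0))
    (h : ∀ᶠ r in atTop, (A r)ᶜ ⊆ X r) : Tendsto (fun r => μ (X r)) atTop (𝓝 1) := by
  have hlow : Tendsto (fun r => 1 - μ (A r)) atTop (𝓝 1) := by
    simpa using ENNReal.Tendsto.sub tendsto_const_nhds hA (Or.inl ENNReal.one_ne_top)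
  refine tendsto_of_tendsto_of_tendsto_of_le_of_le' hlow tendsto_const_nhds ?_
    (Eventually.of_forall fun r => prob_le_one)
  filter_upwards [h] with r hr
  rw [tsub_le_iff_right, ← measure_univ (μ := μ)]
  refine (measure_mono fun x _ => ?_).trans (measure_union_le (X r) (A r))
  by_cases hx : x ∈ A r
  · exact Or.inr hx
  · exact Or.inl (hr hx)

theorem statement11 {E : Type*} [NormedAddCommGroup E] [NormedSpace ℝ E]
    [CompleteSpace E] [SecondCountableTopology E] [MeasurableSpace E] [BorelSpace E]
    (μ : Measure E) [IsProbabilityMeasure μ]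
    (hGauss : IsCenteredGaussian μ) (hND : μ ≠ Measure.dirac 0)
    (φs φinv : ℝ → ℝ)
    (hconv : ConvexOn ℝ (Set.Ioi 0) φs)
    (hbij : Set.BijOn φs (Set.Ioi 0) (Set.Ioi 0))
    (hinv : Set.InvOn φinv φs (Set.Ioi 0) (Set.Ioi 0))
    (hprob : ∀ δ > (0:ℝ),
      Tendsto (fun ε : ℝ => μ {x | δ < |rsbf μ x ε / φs ε - 1|}) (𝓝[>] 0) (𝓝 0))
    (ν₁ : ℝ) (hν₁ : 0 < ν₁)
    (hgrow : ∀ᶠ r in atTop, ν₁ * φinv r ≤ φinv (2 * r))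
    (κ : ℝ) (hκ : κ ∈ Set.Ioo (0:ℝ) 1) :
    Tendsto (fun r : ℝ =>
        μ {x | rsbf μ x ((1 + κ) * φinv r) ≤ (1 - (1/4) * min 1 (ν₁ * κ)) * r})
      atTop (𝓝 1) ∧
    Tendsto (fun r : ℝ =>
        μ {x | (1 + (1/4) * min 1 (ν₁ * κ)) * r ≤ rsbf μ x ((1 - κ) * φinv r)})
      atTop (𝓝 1) := by
  have hanti : StrictAntiOn φs (Set.Ioi 0) :=
    (strictMonoOn_or_strictAntiOn hconv hbij.injOn).resolve_left
      (not_strictMonoOn μ hGauss hND φs hbij hprob)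
  have hpos : ∀ r > 0, 0 < φinv r := by
    intro r hr
    obtain ⟨e, he, rfl⟩ := hbij.surjOn (show r ∈ Set.Ioi (0 : ℝ) from hr)
    rw [hinv.1 he]
    exact he
  have hφφ : ∀ r > 0, φs (φinv r) = r := fun r hr => hinv.2 hr
  have hφinv : Tendsto φinv atTop (𝓝[>] 0) := by
    refine tendsto_nhdsWithin_iff.mpr ⟨?_, ?_⟩
    · refine tendsto_order.mpr ⟨fun a ha => ?_, fun a ha => ?_⟩
      · filter_upwards [eventually_gt_atTop 0] with r hr using ha.trans (hpos r hr)
      · filter_upwards [eventually_gt_atTop 0, eventually_gt_atTop (φs a)] with r hr hra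
        rw [← hφφ r hr] at hra
        exact (hanti.lt_iff_gt ha (hpos r hr)).mp hra
    · filter_upwards [eventually_gt_atTop 0] with r hr using hpos r hr
  set d := (1 / 4) * min 1 (ν₁ * κ) with hd_def
  have hνκ : 0 < ν₁ * κ := mul_pos hν₁ hκ.1
  have hd0 : 0 < d := mul_pos (by norm_num) (lt_min one_pos hνκ)
  have hd : 4 * d ≤ 1 := by linarith [min_le_left 1 (ν₁ * κ)]
  have hd' : 4 * d ≤ ν₁ * κ := by linarith [min_le_right 1 (ν₁ * κ)]
  have hgapev : ∀ᶠ r in atTop, φs ((1 + κ) * φinv r) ≤ (1 - 2 * d) * r ∧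
      (1 + 2 * d) * r ≤ φs ((1 - κ) * φinv r) := by
    filter_upwards [eventually_gt_atTop 0,
      (tendsto_id.atTop_div_const (two_pos (α := ℝ))).eventually hgrow] with r hr hg
    have hr2 : 0 < r / 2 := half_pos hr
    have hlt : φinv r < φinv (r / 2) := by
      refine (hanti.lt_iff_gt (hpos _ hr2) (hpos r hr)).mp ?_
      rw [hφφ r hr, hφφ _ hr2]
      linarith
    have hg' : ν₁ * φinv (r / 2) ≤ φinv r := by
      have : 2 * (r / 2) = r := by ring
      simpa [this] using hg
    exact phi_gap hconv hanti (hpos r hr) hlt hr (hφφ r hr) (hφφ _ hr2) hg' hκ hd hd' hd0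
  have hscale : ∀ c > 0, Tendsto (fun r => c * φinv r) atTop (𝓝[>] 0) := by
    intro c hc
    refine tendsto_nhdsWithin_iff.mpr ⟨?_, ?_⟩
    · simpa using (tendsto_nhds_of_tendsto_nhdsWithin hφinv).const_mul c
    · filter_upwards [eventually_gt_atTop 0] with r hr using mul_pos hc (hpos r hr)
  have hκp : 0 < 1 + κ := by linarith [hκ.1]
  have hκm : 0 < 1 - κ := by linarith [hκ.2]
  -- The tolerance `d / 2` is small enough that `(1 + d / 2) (1 - 2 d) ≤ 1 - d` and
  -- `(1 - d / 2) (1 + 2 d) ≥ 1 + d`.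
  constructor
  · refine tendsto_measure_one μ ((hprob (d / 2) (half_pos hd0)).comp (hscale _ hκp)) ?_
    filter_upwards [hgapev, eventually_gt_atTop 0] with r hg hr x hx
    rw [Set.mem_compl_iff, Set.mem_ofPred_eq, not_lt] at hx
    have hφ : 0 < φs ((1 + κ) * φinv r) := hbij.mapsTo (mul_pos hκp (hpos r hr))
    have h1 : rsbf μ x ((1 + κ) * φinv r) / φs ((1 + κ) * φinv r) ≤ 1 + d / 2 := by
      linarith [(abs_le.mp hx).2]
    rw [div_le_iff₀ hφ] at h1
    have h2 : (1 + d / 2) * φs ((1 + κ) * φinv r) ≤ (1 + d / 2) * ((1 - 2 * d) * r) :=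
      mul_le_mul_of_nonneg_left hg.1 (by linarith)
    have h3 : (1 + d / 2) * (1 - 2 * d) * r ≤ (1 - d) * r :=
      mul_le_mul_of_nonneg_right (by nlinarith) hr.le
    show rsbf μ x ((1 + κ) * φinv r) ≤ (1 - d) * r
    linarith
  · refine tendsto_measure_one μ ((hprob (d / 2) (half_pos hd0)).comp (hscale _ hκm)) ?_
    filter_upwards [hgapev, eventually_gt_atTop 0] with r hg hr x hx
    rw [Set.mem_compl_iff, Set.mem_ofPred_eq, not_lt] at hx
    have hφ : 0 < φs ((1 - κ) * φinv r) := hbij.mapsTo (mul_pos hκm (hpos r hr))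
    have h1 : 1 - d / 2 ≤ rsbf μ x ((1 - κ) * φinv r) / φs ((1 - κ) * φinv r) := by
      linarith [(abs_le.mp hx).1]
    rw [le_div_iff₀ hφ] at h1
    have h2 : (1 - d / 2) * ((1 + 2 * d) * r) ≤ (1 - d / 2) * φs ((1 - κ) * φinv r) :=
      mul_le_mul_of_nonneg_left hg.2 (by linarith)
    have h3 : (1 + d) * r ≤ (1 - d / 2) * (1 + 2 * d) * r :=
      mul_le_mul_of_nonneg_right (by nlinarith) hr.le
    show (1 + d) * r ≤ rsbf μ x ((1 - κ) * φinv r)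
    linarith
end
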